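/- arXiv:2512.04601 — 3 statements merged into one kernel-verified Lean document; each statement's English description precedes it below -/
import Mathlib

section
/- Let S and A be finite nonempty types, P : S → A → PMF S a transition kernel, π : S → PMF A a policy, γ a real number with 0 ≤ γ < 1, φ : S → (Fin d → ℝ) a feature map, and w : Fin d → ℝ a weight vector. Suppose the reward function satisfies r(s,a) = ∑_i φ(s) i · w i for all (s,a). Let Ψ^π be the unique solution of Ψ^π(s,a) = φ(s) + γ · ∑_{s'} (P s a) s' · ∑_{a'} (π s') a' · Ψ^π(s',a'), and let Q^π be the unique solution of Q^π(s,a) = r(s,a) + γ · ∑_{s'} (P s a) s' · ∑_{a'} (π s') a' · Q^π(s',a'). Then Q^π(s,a) = ∑_i Ψ^π(s,a) i · w i for all (s,a). -/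
open scoped BigOperators

/-! The policy-averaged transition operator is an average, so it is nonexpansive for the sup norm
and commutes with every linear map applied to the values. Hence each Bellman operator with `|γ| < 1`
is a contraction, and pairing with `w` carries the Bellman operator with cumulant `φ` to the one
with cumulant `φ · w`: the image `Ψ · w` of a fixed point of the former is the only fixed point of
the latter. -/

open Function

section PMF

variable {α F : Type*} [Fintype α] [SeminormedAddCommGroup F] [NormedSpace ℝ F]

theorem sum_toReal_pmf (p : PMF α) : ∑ x, (p x).toReal = 1 := by
  rw [← ENNReal.toReal_sum fun x _ => p.apply_ne_top x, ← tsum_fintype (L := .unconditional α),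
    p.tsum_coe, ENNReal.toReal_one]

theorem norm_sum_toReal_pmf_smul_le (p : PMF α) {f : α → F} {M : ℝ} (hf : ∀ x, ‖f x‖ ≤ M) :
    ‖∑ x, (p x).toReal • f x‖ ≤ M :=
  mem_closedBall_zero_iff.1 <| (convex_closedBall (0 : F) M).sum_mem
    (fun _ _ => ENNReal.toReal_nonneg) (sum_toReal_pmf p)
    fun x _ => mem_closedBall_zero_iff.2 (hf x)

end PMF

section Bellman

variable {S A E F : Type*} [Fintype S] [Fintype A]
  (P : S → A → PMF S) (π : S → PMF A) (γ : ℝ)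

section Module

variable [AddCommMonoid E] [Module ℝ E] [AddCommMonoid F] [Module ℝ F]

/-- The transition operator of the Markov chain on state-action pairs induced by the policy `π`:
it sends `f` to the conditional expectation of `f` at the next state-action pair. Values lie in an
arbitrary real module, so that it acts on Q-functions and on successor features alike. -/
def transitionOperator : (S × A → E) →ₗ[ℝ] (S × A → E) where
  toFun f x := ∑ s', (P x.1 x.2 s').toReal • ∑ a', (π s' a').toReal • f (s', a')
  map_add' f g := by
    ext x
    simp only [Pi.add_apply, smul_add, Finset.sum_add_distrib]
  map_smul' c f := by
    ext x
    simp only [Pi.smul_apply, RingHom.id_apply, Finset.smul_sum, smul_comm c]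

/-- The Bellman operator of the policy `π` with discount factor `γ` and cumulant `r`. Its fixed
points are the Q-function when `r` is the reward, and the successor features when `r` is the
feature map. -/
def bellmanOperator (r f : S × A → E) : S × A → E :=
  r + γ • transitionOperator P π f

theorem bellmanOperator_apply (r f : S × A → E) (x : S × A) :
    bellmanOperator P π γ r f x =
      r x + γ • ∑ s', (P x.1 x.2 s').toReal • ∑ a', (π s' a').toReal • f (s', a') :=
  rfl

theorem semiconj_comp_bellmanOperator (L : E →ₗ[ℝ] F) (r : S × A → E) :
    Semiconj (L ∘ ·) (bellmanOperator P π γ r) (bellmanOperator P π γ (L ∘ r)) := fun f => by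
  ext x
  simp only [comp_apply, bellmanOperator_apply, map_add, map_smul, map_sum]

end Module

theorem norm_transitionOperator_le [SeminormedAddCommGroup F] [NormedSpace ℝ F]
    (f : S × A → F) : ‖transitionOperator P π f‖ ≤ ‖f‖ :=
  (pi_norm_le_iff_of_nonneg (norm_nonneg f)).2 fun x =>
    norm_sum_toReal_pmf_smul_le (P x.1 x.2) fun s' =>
      norm_sum_toReal_pmf_smul_le (π s') fun a' => norm_le_pi_norm f (s', a')

variable {γ} [NormedAddCommGroup F] [NormedSpace ℝ F]

theorem contractingWith_bellmanOperator (hγ : |γ| < 1) (r : S × A → F) :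
    ContractingWith ‖γ‖₊ (bellmanOperator P π γ r) := by
  refine ⟨by exact_mod_cast hγ, LipschitzWith.of_dist_le_mul fun f g => ?_⟩
  calc dist (bellmanOperator P π γ r f) (bellmanOperator P π γ r g)
      = ‖γ • transitionOperator P π (f - g)‖ := by
        rw [bellmanOperator, bellmanOperator, dist_add_left, dist_eq_norm, ← smul_sub, ← map_sub]
    _ = ‖γ‖ * ‖transitionOperator P π (f - g)‖ := norm_smul γ _
    _ ≤ ‖γ‖ * ‖f - g‖ := by gcongr; exact norm_transitionOperator_le P π (f - g)
    _ = ‖γ‖₊ * dist f g := by rw [coe_nnnorm, dist_eq_norm]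

theorem qfun_eq_successor_features_dot_w_general [AddCommMonoid E] [Module ℝ E] (hγ : |γ| < 1)
    (L : E →ₗ[ℝ] F) {φ Ψ : S × A → E} {Q : S × A → F}
    (hΨ : IsFixedPt (bellmanOperator P π γ φ) Ψ)
    (hQ : IsFixedPt (bellmanOperator P π γ (L ∘ φ)) Q) : Q = L ∘ Ψ :=
  (contractingWith_bellmanOperator P π hγ (L ∘ φ)).fixedPoint_unique' hQ
    (hΨ.map (semiconj_comp_bellmanOperator P π γ L φ))

end Bellman

/-- If the reward is linear in the features, `r(s,a) = φ(s)·w`, then the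
Q-function is linear in the successor features: `Q^π(s,a) = Ψ^π(s,a)·w`. -/
theorem qfun_eq_successor_features_dot_w {S A : Type*} {d : ℕ}
    [Fintype S] [Nonempty S] [Fintype A] [Nonempty A]
    (P : S → A → PMF S) (π : S → PMF A) (γ : ℝ) (hγ0 : 0 ≤ γ) (hγ1 : γ < 1)
    (φ : S → Fin d → ℝ) (w : Fin d → ℝ) (r : S → A → ℝ)
    (hr : ∀ (s : S) (a : A), r s a = ∑ i : Fin d, φ s i * w i)
    (Ψ : S × A → Fin d → ℝ)
    (hΨ : ∀ (s : S) (a : A) (i : Fin d),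
      Ψ (s, a) i = φ s i + γ * ∑ s' : S, ((P s a) s').toReal *
        ∑ a' : A, ((π s') a').toReal * Ψ (s', a') i)
    (Q : S × A → ℝ)
    (hQ : ∀ (s : S) (a : A),
      Q (s, a) = r s a + γ * ∑ s' : S, ((P s a) s').toReal *
        ∑ a' : A, ((π s') a').toReal * Q (s', a')) :
    ∀ (s : S) (a : A), Q (s, a) = ∑ i : Fin d, Ψ (s, a) i * w i := by
  have hΨ_fixed : IsFixedPt (bellmanOperator P π γ fun x => φ x.1) Ψ := by
    ext ⟨s, a⟩ i
    simp only [hΨ s a i, bellmanOperator_apply, Pi.add_apply, Pi.smul_apply, Finset.sum_apply,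
      smul_eq_mul]
  have hQ_fixed : IsFixedPt
      (bellmanOperator P π γ (Fintype.linearCombination ℝ w ∘ fun x => φ x.1)) Q := by
    ext ⟨s, a⟩
    simp only [hQ s a, hr s a, bellmanOperator_apply, comp_apply, Fintype.linearCombination_apply,
      smul_eq_mul]
  have hγ : |γ| < 1 := (abs_of_nonneg hγ0).trans_lt hγ1
  exact fun s a => congrFun (qfun_eq_successor_features_dot_w_general P π hγ
    (Fintype.linearCombination ℝ w) hΨ_fixed hQ_fixed) (s, a)
end

section
/- Let S and A be finite nonempty types, P : S → A → PMF S a transition kernel, γ a real number with 0 ≤ γ < 1, and r : S → A → ℝ a reward function. For a policy π : S → PMF A let Q^π denote the unique solution of Q^π(s,a) = r(s,a) + γ · ∑_{s'} (P s a) s' · ∑_{a'} (π s') a' · Q^π(s',a'), and let V^π(s) = ∑_a (π s) a · Q^π(s,a). Suppose policies π and π' satisfy ∑_a (π' s) a · Q^π(s,a) ≥ V^π(s) for every state s, with strict inequality at some state s₀. Then V^{π'}(s) ≥ V^π(s) for all s and V^{π'}(s₀) > V^π(s₀). -/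
open scoped BigOperators

/-!
Let `A(s) = 𝔼_{a ∼ π'(s)} Q^π(s,a) - V^π(s) ≥ 0` be the advantage of `π'` over `π`. Subtracting the
two Bellman equations, a lower bound `m` for the gap `V^{π'} - V^π` yields the sharper lower bound
`γ * m + A`. For `m` the infimum of the gap this gives `m ≥ γ * m`, so `m ≥ 0` because `γ < 1`;
substituting `m = 0` back gives `V^{π'} - V^π ≥ A`, which is positive at `s₀`.
-/

namespace MarkovDecision

section Mean

variable {α : Type*} (p : PMF α) {f g : α → ℝ}

/-- The expectation of `f` under `p`, as a sum; it is `0` when the sum does not converge absolutely,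
which cannot happen for bounded `f`. -/
noncomputable def mean (f : α → ℝ) : ℝ := ∑' x, (p x).toReal * f x

lemma hasSum_toReal_mul_const (c : ℝ) : HasSum (fun x => (p x).toReal * c) c := by
  have hsummable : Summable fun x => (p x).toReal := ENNReal.summable_toReal p.tsum_coe_ne_top
  have hone : ∑' x, (p x).toReal = 1 := by
    rw [← ENNReal.tsum_toReal_eq p.apply_ne_top, p.tsum_coe, ENNReal.toReal_one]
  simpa only [hone, one_mul] using hsummable.hasSum.mul_right c

lemma norm_toReal_mul_le {C : ℝ} (hf : ∀ x, |f x| ≤ C) (x : α) :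
    ‖(p x).toReal * f x‖ ≤ (p x).toReal * C := by
  rw [norm_mul, Real.norm_of_nonneg ENNReal.toReal_nonneg, Real.norm_eq_abs]
  exact mul_le_mul_of_nonneg_left (hf x) ENNReal.toReal_nonneg

lemma summable_toReal_mul {C : ℝ} (hf : ∀ x, |f x| ≤ C) :
    Summable fun x => (p x).toReal * f x :=
  .of_norm_bounded (hasSum_toReal_mul_const p C).summable (norm_toReal_mul_le p hf)

lemma abs_mean_le {C : ℝ} (hf : ∀ x, |f x| ≤ C) : |mean p f| ≤ C :=
  tsum_of_norm_bounded (hasSum_toReal_mul_const p C) (norm_toReal_mul_le p hf)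

variable {p}

lemma le_mean_sub_mean (hf : Summable fun x => (p x).toReal * f x)
    (hg : Summable fun x => (p x).toReal * g x) {m : ℝ} (hm : ∀ x, m ≤ f x - g x) :
    m ≤ mean p f - mean p g := by
  refine hasSum_le (fun x => ?_) (hasSum_toReal_mul_const p m) (hf.hasSum.sub hg.hasSum)
  rw [← mul_sub]
  exact mul_le_mul_of_nonneg_left (hm x) ENNReal.toReal_nonneg

end Mean

lemma nonneg_of_forall_mul_le {ι : Type*} {x : ι → ℝ} {γ : ℝ} (hγ1 : γ < 1)
    (hx : BddBelow (Set.range x)) (hstep : ∀ m, (∀ i, m ≤ x i) → ∀ i, γ * m ≤ x i) (i : ι) :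
    0 ≤ x i := by
  have : Nonempty ι := ⟨i⟩
  have hinf : γ * ⨅ j, x j ≤ ⨅ j, x j := le_ciInf (hstep _ (ciInf_le hx))
  have hinf_nonneg : 0 ≤ ⨅ j, x j := by nlinarith
  exact hinf_nonneg.trans (ciInf_le hx i)

variable {S A : Type*} {P : S → A → PMF S} {γ : ℝ} {r : S → A → ℝ} {π π' : S → PMF A}
  {Q Q' : S × A → ℝ}

/-- The value at each state of drawing an action from `π` and scoring it by `Q`. It is `V^π` when
`Q = Q^π`, and the one-step look-ahead value of deviating to `π` when `Q` belongs to another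
policy. -/
noncomputable def stateValue (π : S → PMF A) (Q : S × A → ℝ) (s : S) : ℝ :=
  mean (π s) fun a => Q (s, a)

/-- `Q` is the Q-function of `π`: a bounded fixed point of the Bellman operator of `π`. Boundedness
is automatic when `S` and `A` are finite; for `0 ≤ γ < 1` it makes the fixed point unique. -/
structure IsQFunction (P : S → A → PMF S) (γ : ℝ) (r : S → A → ℝ) (π : S → PMF A)
    (Q : S × A → ℝ) : Prop where
  bounded : ∃ C, ∀ z, |Q z| ≤ C
  bellman : ∀ s a, Q (s, a) = r s a + γ * mean (P s a) (stateValue π Q)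

namespace IsQFunction

lemma summable (hQ : IsQFunction P γ r π Q) (p : PMF A) (s : S) :
    Summable fun a => (p a).toReal * Q (s, a) :=
  let ⟨_, hC⟩ := hQ.bounded
  summable_toReal_mul p fun a => hC (s, a)

lemma exists_abs_stateValue_le (hQ : IsQFunction P γ r π Q) :
    ∃ C, ∀ s, |stateValue π Q s| ≤ C :=
  let ⟨C, hC⟩ := hQ.bounded
  ⟨C, fun s => abs_mean_le (π s) fun a => hC (s, a)⟩

lemma summable_stateValue (hQ : IsQFunction P γ r π Q) (p : PMF S) :
    Summable fun s => (p s).toReal * stateValue π Q s :=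
  let ⟨_, hC⟩ := hQ.exists_abs_stateValue_le
  summable_toReal_mul p hC

lemma bddBelow_stateValue_sub (hQ : IsQFunction P γ r π Q) (hQ' : IsQFunction P γ r π' Q') :
    BddBelow (Set.range fun s => stateValue π' Q' s - stateValue π Q s) := by
  obtain ⟨C, hC⟩ := hQ.exists_abs_stateValue_le
  obtain ⟨C', hC'⟩ := hQ'.exists_abs_stateValue_le
  refine ⟨-C' - C, ?_⟩
  rintro _ ⟨s, rfl⟩
  exact sub_le_sub (abs_le.mp (hC' s)).1 (abs_le.mp (hC s)).2

lemma mul_le_sub (hγ0 : 0 ≤ γ) (hQ : IsQFunction P γ r π Q) (hQ' : IsQFunction P γ r π' Q')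
    {m : ℝ} (hm : ∀ s, m ≤ stateValue π' Q' s - stateValue π Q s) (s : S) (a : A) :
    γ * m ≤ Q' (s, a) - Q (s, a) :=
  calc γ * m ≤ γ * (mean (P s a) (stateValue π' Q') - mean (P s a) (stateValue π Q)) :=
        mul_le_mul_of_nonneg_left
          (le_mean_sub_mean (hQ'.summable_stateValue _) (hQ.summable_stateValue _) hm) hγ0
    _ = Q' (s, a) - Q (s, a) := by rw [hQ'.bellman, hQ.bellman]; ring

lemma mul_le_stateValue_sub_lookahead (hγ0 : 0 ≤ γ) (hQ : IsQFunction P γ r π Q)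
    (hQ' : IsQFunction P γ r π' Q') {m : ℝ}
    (hm : ∀ s, m ≤ stateValue π' Q' s - stateValue π Q s) (s : S) :
    γ * m ≤ stateValue π' Q' s - stateValue π' Q s :=
  le_mean_sub_mean (hQ'.summable _ s) (hQ.summable _ s) (hQ.mul_le_sub hγ0 hQ' hm s)

lemma stateValue_le_of_le_lookahead (hγ0 : 0 ≤ γ) (hγ1 : γ < 1) (hQ : IsQFunction P γ r π Q)
    (hQ' : IsQFunction P γ r π' Q') (himp : ∀ s, stateValue π Q s ≤ stateValue π' Q s) (s : S) :
    stateValue π Q s ≤ stateValue π' Q' s :=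
  sub_nonneg.mp <| nonneg_of_forall_mul_le hγ1 (hQ.bddBelow_stateValue_sub hQ')
    (fun _ hm t => (hQ.mul_le_stateValue_sub_lookahead hγ0 hQ' hm t).trans
      (sub_le_sub_left (himp t) _)) s

lemma lookahead_le_stateValue (hγ0 : 0 ≤ γ) (hγ1 : γ < 1) (hQ : IsQFunction P γ r π Q)
    (hQ' : IsQFunction P γ r π' Q') (himp : ∀ s, stateValue π Q s ≤ stateValue π' Q s) (s : S) :
    stateValue π' Q s ≤ stateValue π' Q' s := by
  have hgap : ∀ t, 0 ≤ stateValue π' Q' t - stateValue π Q t := fun t =>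
    sub_nonneg.mpr (hQ.stateValue_le_of_le_lookahead hγ0 hγ1 hQ' himp t)
  simpa only [mul_zero, sub_nonneg] using hQ.mul_le_stateValue_sub_lookahead hγ0 hQ' hgap s

end IsQFunction

lemma stateValue_eq_sum [Fintype A] (π : S → PMF A) (Q : S × A → ℝ) (s : S) :
    stateValue π Q s = ∑ a, (π s a).toReal * Q (s, a) :=
  tsum_fintype _

lemma isQFunction_of_fintype [Fintype S] [Fintype A]
    (hQ : ∀ s a, Q (s, a) = r s a + γ * ∑ s', (P s a s').toReal *
      ∑ a', (π s' a').toReal * Q (s', a')) :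
    IsQFunction P γ r π Q where
  bounded := Finite.exists_le fun z => |Q z|
  bellman := by simpa only [mean, stateValue, tsum_fintype] using hQ

end MarkovDecision

open MarkovDecision in
theorem strict_policy_improvement_general {S A : Type*} {P : S → A → PMF S} {γ : ℝ}
    (hγ0 : 0 ≤ γ) (hγ1 : γ < 1) {r : S → A → ℝ} {π π' : S → PMF A} {Q Q' : S × A → ℝ}
    (hQ : IsQFunction P γ r π Q) (hQ' : IsQFunction P γ r π' Q')
    (himp : ∀ s, stateValue π Q s ≤ stateValue π' Q s) (s₀ : S)
    (hstrict : stateValue π Q s₀ < stateValue π' Q s₀) :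
    (∀ s, stateValue π Q s ≤ stateValue π' Q' s) ∧
      stateValue π Q s₀ < stateValue π' Q' s₀ :=
  ⟨hQ.stateValue_le_of_le_lookahead hγ0 hγ1 hQ' himp,
    hstrict.trans_le (hQ.lookahead_le_stateValue hγ0 hγ1 hQ' himp s₀)⟩

/-- Strict policy improvement: if `π'` improves on `V^π` at every state, with a
strict improvement at some state `s₀`, then `V^{π'} ≥ V^π` everywhere and
`V^{π'}(s₀) > V^π(s₀)`, where `V^π(s) = ∑_a π(a|s) Q^π(s,a)`. -/
theorem strict_policy_improvement {S A : Type*}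
    [Fintype S] [Nonempty S] [Fintype A] [Nonempty A]
    (P : S → A → PMF S) (γ : ℝ) (hγ0 : 0 ≤ γ) (hγ1 : γ < 1)
    (r : S → A → ℝ) (π π' : S → PMF A)
    (Qπ : S × A → ℝ)
    (hQπ : ∀ (s : S) (a : A),
      Qπ (s, a) = r s a + γ * ∑ s' : S, ((P s a) s').toReal *
        ∑ a' : A, ((π s') a').toReal * Qπ (s', a'))
    (Qπ' : S × A → ℝ)
    (hQπ' : ∀ (s : S) (a : A),
      Qπ' (s, a) = r s a + γ * ∑ s' : S, ((P s a) s').toReal *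
        ∑ a' : A, ((π' s') a').toReal * Qπ' (s', a'))
    (himp : ∀ s : S,
      ∑ a : A, ((π' s) a).toReal * Qπ (s, a) ≥
        ∑ a : A, ((π s) a).toReal * Qπ (s, a))
    (s₀ : S)
    (hstrict : ∑ a : A, ((π' s₀) a).toReal * Qπ (s₀, a) >
        ∑ a : A, ((π s₀) a).toReal * Qπ (s₀, a)) :
    (∀ s : S, ∑ a : A, ((π' s) a).toReal * Qπ' (s, a) ≥
        ∑ a : A, ((π s) a).toReal * Qπ (s, a)) ∧
    ∑ a : A, ((π' s₀) a).toReal * Qπ' (s₀, a) >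
        ∑ a : A, ((π s₀) a).toReal * Qπ (s₀, a) := by
  open MarkovDecision in
  simp only [← stateValue_eq_sum] at himp hstrict ⊢
  exact strict_policy_improvement_general hγ0 hγ1 (isQFunction_of_fintype hQπ)
    (isQFunction_of_fintype hQπ') himp s₀ hstrict
end

section
/- Let S and A be finite nonempty types, P : S → A → PMF S a transition kernel, γ a real number with 0 ≤ γ < 1, and r : S → A → ℝ a reward function. For a policy π : S → PMF A let Q^π denote the unique solution of Q^π(s,a) = r(s,a) + γ · ∑_{s'} (P s a) s' · ∑_{a'} (π s') a' · Q^π(s',a'). Then there exists a deterministic policy, i.e. a function μ* : S → A (identified with the policy s ↦ PMF.pure (μ* s)), such that for every policy π : S → PMF A and every (s,a), Q^{μ*}(s,a) ≥ Q^π(s,a). -/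
open scoped BigOperators

/-! The Bellman optimality operator replaces the average over the next action of a policy by a
maximum, so it dominates the Bellman operator of every policy. It is monotone and shrinks constant
shifts by `γ`, hence is a contraction for the sup norm. Every `Q^π` is a subsolution of the
optimality equation, and iterating the operator from a subsolution increases to its fixed point
`Q*`, so `Q^π ≤ Q*`. Conversely, if `μ` is greedy for `Q*`, then maximising and averaging over `μ`
agree at `Q*`, so `Q*` is the Q-function of `μ`. -/

open scoped NNReal

theorem lipschitzWith_of_monotone_of_map_add_const_le {ι κ : Type*} [Fintype ι] [Fintype κ]
    {T : (ι → ℝ) → κ → ℝ} {K : ℝ≥0} (hmono : Monotone T)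
    (hshift : ∀ f (c : ℝ), 0 ≤ c → ∀ j, T (fun i => f i + c) j ≤ T f j + K * c) :
    LipschitzWith K T := by
  have map_le_add (f g : ι → ℝ) (j : κ) : T f j ≤ T g j + K * dist f g := by
    have hfg : f ≤ fun i => g i + dist f g := fun i =>
      sub_le_iff_le_add'.1 ((le_abs_self _).trans (dist_le_pi_dist f g i))
    exact (hmono hfg j).trans (hshift g _ dist_nonneg j)
  refine LipschitzWith.of_dist_le_mul fun f g => ?_
  refine (dist_pi_le_iff (by positivity)).2 fun j => abs_sub_le_iff.2 ⟨?_, ?_⟩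
  · exact sub_le_iff_le_add'.2 (map_le_add f g j)
  · exact sub_le_iff_le_add'.2 (dist_comm f g ▸ map_le_add g f j)

theorem le_fixedPoint_of_le_map {α : Type*} [MetricSpace α] [CompleteSpace α] [Nonempty α]
    [Preorder α] [ClosedIciTopology α] {K : ℝ≥0} {T : α → α} (hT : ContractingWith K T)
    (hmono : Monotone T) {x : α} (hx : x ≤ T x) : x ≤ hT.fixedPoint T :=
  ge_of_tendsto' (hT.tendsto_iterate_fixedPoint x) fun n =>
    hmono.monotone_iterate_of_le_map hx n.zero_le

section ExpectedValue

variable {α : Type*} [Fintype α]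

/-- The expected value of a real function under a probability mass function on a finite type, as a
finite sum so that no measurable structure is needed. -/
noncomputable def expectedValue (p : PMF α) (f : α → ℝ) : ℝ :=
  ∑ a, (p a).toReal * f a

theorem expectedValue_mono (p : PMF α) : Monotone (expectedValue p) := fun _ _ hfg =>
  Finset.sum_le_sum fun a _ => mul_le_mul_of_nonneg_left (hfg a) ENNReal.toReal_nonneg

theorem expectedValue_const (p : PMF α) (c : ℝ) : expectedValue p (fun _ => c) = c := by
  have hsum : ∑ a, (p a).toReal = 1 := by
    rw [← ENNReal.toReal_sum fun a _ => p.apply_ne_top a,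
      ← tsum_fintype (L := .unconditional α), p.tsum_coe, ENNReal.toReal_one]
  rw [expectedValue, ← Finset.sum_mul, hsum, one_mul]

theorem expectedValue_add (p : PMF α) (f g : α → ℝ) :
    expectedValue p (fun a => f a + g a) = expectedValue p f + expectedValue p g := by
  simp only [expectedValue, mul_add, Finset.sum_add_distrib]

theorem expectedValue_pure (a : α) (f : α → ℝ) : expectedValue (PMF.pure a) f = f a := by
  classical
  simp [expectedValue, PMF.pure_apply, apply_ite ENNReal.toReal]

theorem expectedValue_le_ciSup (p : PMF α) (f : α → ℝ) : expectedValue p f ≤ ⨆ a, f a :=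
  calc
    expectedValue p f ≤ expectedValue p fun _ => ⨆ a, f a :=
      expectedValue_mono p fun a => le_ciSup (Set.finite_range f).bddAbove a
    _ = ⨆ a, f a := expectedValue_const p _

end ExpectedValue

namespace MDP

variable {S A : Type*} [Fintype S] (P : S → A → PMF S) (γ : ℝ≥0) (r : S → A → ℝ)

/-- The one-step lookahead of a state value function `V`: the action value `r + γ P V` of acting
once and collecting `V` at the next state. The discount factor has type `ℝ≥0` so that it can also
serve as the contraction constant. -/
noncomputable def lookahead (V : S → ℝ) : S × A → ℝ :=
  fun x => r x.1 x.2 + γ * expectedValue (P x.1 x.2) V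

/-- The Bellman operator of the policy `π`, whose fixed point is the Q-function of `π`. -/
noncomputable def bellmanOp [Fintype A] (π : S → PMF A) (Q : S × A → ℝ) : S × A → ℝ :=
  lookahead P γ r fun s => expectedValue (π s) fun a => Q (s, a)

/-- The Bellman optimality operator, whose fixed point is the optimal Q-function. -/
noncomputable def optimalityOp (Q : S × A → ℝ) : S × A → ℝ :=
  lookahead P γ r fun s => ⨆ a, Q (s, a)

theorem lookahead_mono : Monotone (lookahead P γ r) := fun _ _ hVW x => by
  unfold lookahead
  gcongr
  exact expectedValue_mono _ hVW

theorem lookahead_add_const (V : S → ℝ) (c : ℝ) (x : S × A) :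
    lookahead P γ r (fun s => V s + c) x = lookahead P γ r V x + γ * c := by
  rw [lookahead, expectedValue_add, expectedValue_const, mul_add, ← add_assoc, lookahead]

theorem optimalityOp_mono [Finite A] : Monotone (optimalityOp P γ r) := fun _ _ hQ =>
  lookahead_mono P γ r fun s => ciSup_mono (Set.finite_range _).bddAbove fun a => hQ (s, a)

theorem optimalityOp_add_const [Finite A] [Nonempty A] (Q : S × A → ℝ) (c : ℝ) (x : S × A) :
    optimalityOp P γ r (fun y => Q y + c) x = optimalityOp P γ r Q x + γ * c := by
  have hmax (s : S) : ⨆ a, (Q (s, a) + c) = (⨆ a, Q (s, a)) + c :=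
    (ciSup_add (Set.finite_range _).bddAbove c).symm
  simp only [optimalityOp, hmax, lookahead_add_const]

theorem contractingWith_optimalityOp [Fintype A] [Nonempty A] (hγ : γ < 1) :
    ContractingWith γ (optimalityOp P γ r) :=
  ⟨hγ, lipschitzWith_of_monotone_of_map_add_const_le (optimalityOp_mono P γ r)
    fun Q c _ x => (optimalityOp_add_const P γ r Q c x).le⟩

theorem bellmanOp_le_optimalityOp [Fintype A] (π : S → PMF A) (Q : S × A → ℝ) :
    bellmanOp P γ r π Q ≤ optimalityOp P γ r Q :=
  lookahead_mono P γ r fun s => expectedValue_le_ciSup (π s) fun a => Q (s, a)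

theorem bellmanOp_pure_eq_optimalityOp [Fintype A] {μ : S → A} {Q : S × A → ℝ}
    (hμ : ∀ s, Q (s, μ s) = ⨆ a, Q (s, a)) :
    bellmanOp P γ r (fun s => PMF.pure (μ s)) Q = optimalityOp P γ r Q := by
  simp only [bellmanOp, optimalityOp, expectedValue_pure, hμ]

end MDP

open MDP

/-- Existence of an optimal deterministic policy: there is a deterministic
policy `μ*` (identified with the stochastic policy `s ↦ PMF.pure (μ* s)`)
whose Q-function dominates the Q-function of every stochastic policy. -/
theorem exists_optimal_deterministic_policy {S A : Type*}
    [Fintype S] [Nonempty S] [Fintype A] [Nonempty A]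
    (P : S → A → PMF S) (γ : ℝ) (hγ0 : 0 ≤ γ) (hγ1 : γ < 1)
    (r : S → A → ℝ) :
    ∃ (μstar : S → A) (Qstar : S × A → ℝ),
      (∀ (s : S) (a : A),
        Qstar (s, a) = r s a + γ * ∑ s' : S, ((P s a) s').toReal *
          ∑ a' : A, ((PMF.pure (μstar s') : PMF A) a').toReal * Qstar (s', a')) ∧
      ∀ (π : S → PMF A) (Qπ : S × A → ℝ),
        (∀ (s : S) (a : A),
          Qπ (s, a) = r s a + γ * ∑ s' : S, ((P s a) s').toReal *
            ∑ a' : A, ((π s') a').toReal * Qπ (s', a')) →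
        ∀ (s : S) (a : A), Qstar (s, a) ≥ Qπ (s, a) := by
  lift γ to ℝ≥0 using hγ0
  have hT : ContractingWith γ (optimalityOp P γ r) :=
    contractingWith_optimalityOp P γ r (by exact_mod_cast hγ1)
  let Qstar := hT.fixedPoint
  have greedy (s : S) : ∃ a, Qstar (s, a) = ⨆ a', Qstar (s, a') := exists_eq_ciSup_of_finite
  choose μ hμ using greedy
  have hQstar : Qstar = bellmanOp P γ r (fun s => PMF.pure (μ s)) Qstar :=
    hT.fixedPoint_isFixedPt.symm.trans (bellmanOp_pure_eq_optimalityOp P γ r hμ).symm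
  refine ⟨μ, Qstar, fun s a => congrFun hQstar (s, a), fun π Qπ hπ s a => ?_⟩
  have hQπ : Qπ = bellmanOp P γ r π Qπ := funext fun x => hπ x.1 x.2
  have hsub : Qπ ≤ optimalityOp P γ r Qπ :=
    hQπ.trans_le (bellmanOp_le_optimalityOp P γ r π Qπ)
  exact le_fixedPoint_of_le_map hT (optimalityOp_mono P γ r) hsub (s, a)
end
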